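/- Let G=(V,D,B) be a mixed graph, v∈V, and Y⊆V∖({v}∪sib(v)) with |Y|=|pa(v)|=n. If there exists (Λ,Ω)∈Θ such that, with Σ=φ_G(Λ,Ω), the n×n matrix [(I−Λ)^T Σ]_{Y,pa(v)} is invertible, then Y satisfies the half-trek criterion with respect to v. -/

import Mathlib

open scoped Classical Matrix

/-- A mixed graph `G = (V, D, B)`: a finite vertex set `V`, a set `D` of directed
edges, and a symmetric set `B` of bidirected edges; no self-loops. -/
structure MixedGraph (V : Type*) [Fintype V] [DecidableEq V] where
  D : Finset (V × V)
  B : Finset (V × V)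
  B_symm : ∀ v w : V, (v, w) ∈ B → (w, v) ∈ B
  D_irrefl : ∀ v : V, (v, v) ∉ D
  B_irrefl : ∀ v : V, (v, v) ∉ B

namespace MixedGraph

variable {V : Type*} [Fintype V] [DecidableEq V]

/-- The parents of `v`: nodes `w` with `w → v ∈ D`. -/
def pa (G : MixedGraph V) (v : V) : Finset V :=
  Finset.univ.filter fun w => (w, v) ∈ G.D

/-- The siblings of `v`: nodes `w` with `w ↔ v ∈ B`. -/
def sib (G : MixedGraph V) (v : V) : Finset V :=
  Finset.univ.filter fun w => (w, v) ∈ G.B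

/-- A trek: a walk with no colliding arrowheads.  The field `left` lists the nodes of the
left-hand side from top (head) to source (last); `right` lists the nodes of the right-hand
side from top (head) to target (last); consecutive nodes in each list are joined by directed
edges pointing away from the head.  If `hasBidir` then the two heads are joined by a
bidirected edge, otherwise they coincide (the top node). -/
structure Trek (G : MixedGraph V) where
  left : List V
  right : List V
  left_ne : left ≠ []
  right_ne : right ≠ []
  hasBidir : Bool
  left_chain : left.Chain' fun a b => (a, b) ∈ G.D
  right_chain : right.Chain' fun a b => (a, b) ∈ G.D
  head_cond : if hasBidir then (left.head left_ne, right.head right_ne) ∈ G.B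
              else left.head left_ne = right.head right_ne

namespace Trek

variable {G : MixedGraph V}

/-- The source of a trek. -/
def source (π : G.Trek) : V := π.left.getLast π.left_ne

/-- The target of a trek. -/
def target (π : G.Trek) : V := π.right.getLast π.right_ne

/-- The left-hand side `Left(π)` of a trek, as a set of nodes. -/
def leftSet (π : G.Trek) : Finset V := π.left.toFinset

/-- The right-hand side `Right(π)` of a trek, as a set of nodes. -/
def rightSet (π : G.Trek) : Finset V := π.right.toFinset

/-- A half-trek is a trek whose left-hand side consists of exactly one node. -/
def IsHalfTrek (π : G.Trek) : Prop := π.leftSet.card = 1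

/-- The number of directed edges traversed by the trek. -/
def nEdges (π : G.Trek) : ℕ := (π.left.length - 1) + (π.right.length - 1)

end Trek

/-- `htr v`: the set of nodes `w ∉ {v} ∪ sib(v)` reachable from `v` by a half-trek
containing at least one directed edge. -/
def htr (G : MixedGraph V) (v : V) : Set V :=
  {w | w ≠ v ∧ w ∉ G.sib v ∧
    ∃ π : G.Trek, π.source = v ∧ π.target = w ∧ π.IsHalfTrek ∧ 1 ≤ π.nEdges}

/-- `f` encodes a system of treks from `Y` to `P`: treks with pairwise distinct sources
forming `Y` and pairwise distinct targets forming `P`. -/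
def IsTrekSystem (G : MixedGraph V) (Y P : Finset V) (f : V → G.Trek) : Prop :=
  (∀ y ∈ Y, (f y).source = y) ∧
  (Y.image fun y => (f y).target) = P ∧
  ∀ y ∈ Y, ∀ y' ∈ Y, y ≠ y' → (f y).target ≠ (f y').target

/-- The treks `f y`, `y ∈ Y`, have no sided intersection. -/
def NoSidedIntersection (G : MixedGraph V) (Y : Finset V) (f : V → G.Trek) : Prop :=
  ∀ y ∈ Y, ∀ y' ∈ Y, y ≠ y' →
    Disjoint (f y).leftSet (f y').leftSet ∧ Disjoint (f y).rightSet (f y').rightSet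

/-- `Y` satisfies the half-trek criterion with respect to `v`. -/
def SatisfiesHTC (G : MixedGraph V) (v : V) (Y : Finset V) : Prop :=
  Y.card = (G.pa v).card ∧
  (∀ y ∈ Y, y ≠ v ∧ y ∉ G.sib v) ∧
  ∃ f : V → G.Trek, (∀ y ∈ Y, (f y).IsHalfTrek) ∧
    G.IsTrekSystem Y (G.pa v) f ∧ G.NoSidedIntersection Y f

/-- `Y` satisfies the weak half-trek criterion with respect to `v`. -/
def SatisfiesWeakHTC (G : MixedGraph V) (v : V) (Y : Finset V) : Prop :=
  Y.card = (G.pa v).card ∧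
  (∀ y ∈ Y, y ≠ v ∧ y ∉ G.sib v) ∧
  ∃ f : V → G.Trek, (∀ y ∈ Y, y ∈ G.htr v → (f y).IsHalfTrek) ∧
    G.IsTrekSystem Y (G.pa v) f ∧ G.NoSidedIntersection Y f

/-- `G` is HTC-identifiable. -/
def HTCIdentifiable (G : MixedGraph V) : Prop :=
  ∃ Y : V → Finset V,
    (∀ v, G.SatisfiesHTC v (Y v)) ∧
    ∃ r : V → V → Prop, IsStrictTotalOrder V r ∧
      ∀ v w, w ∈ Y v → w ∈ G.htr v → r w v

/-- `G` is HTC-infinite-to-one. -/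
def HTCInfiniteToOne (G : MixedGraph V) : Prop :=
  ∀ Y : V → Finset V,
    (∃ v, ¬ G.SatisfiesHTC v (Y v)) ∨ ∃ v w, v ∈ Y w ∧ w ∈ Y v

/-- `G` is acyclic: no directed cycle can be formed from the edges in `D`. -/
def Acyclic (G : MixedGraph V) : Prop :=
  ∀ v : V, ¬ Relation.TransGen (fun a b => (a, b) ∈ G.D) v v

/-- `G` is simple: at most one edge between any pair of nodes. -/
def Simple (G : MixedGraph V) : Prop :=
  (∀ e ∈ G.D, e ∉ G.B) ∧ ∀ v w : V, (v, w) ∈ G.D → (w, v) ∉ G.D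

/-- `ℝ^D_reg`: real matrices supported on `D` with `I - Λ` invertible. -/
def RDreg (G : MixedGraph V) : Set (Matrix V V ℝ) :=
  {Λ | (∀ v w, (v, w) ∉ G.D → Λ v w = 0) ∧ IsUnit (1 - Λ).det}

/-- `PD(B)`: positive definite symmetric matrices supported on the diagonal and `B`. -/
def PDB (G : MixedGraph V) : Set (Matrix V V ℝ) :=
  {Ω | Ω.PosDef ∧ ∀ v w, v ≠ w → (v, w) ∉ G.B → Ω v w = 0}

/-- The parameter space `Θ = ℝ^D_reg × PD(B)`. -/
def Theta (G : MixedGraph V) : Set (Matrix V V ℝ × Matrix V V ℝ) :=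
  {θ | θ.1 ∈ G.RDreg ∧ θ.2 ∈ G.PDB}

/-- The parametrization `φ(Λ, Ω) = (I-Λ)^{-T} Ω (I-Λ)^{-1}`. -/
noncomputable def phi {R : Type*} [CommRing R] (Λ Ω : Matrix V V R) : Matrix V V R :=
  ((1 - Λ)⁻¹)ᵀ * Ω * (1 - Λ)⁻¹

/-- Evaluation of a polynomial in the coordinates `λ_vw` (left summand) and `ω_vw`
(right summand) at a parameter point `θ = (Λ, Ω)`. -/
noncomputable def evalParam (θ : Matrix V V ℝ × Matrix V V ℝ)
    (p : MvPolynomial ((V × V) ⊕ (V × V)) ℝ) : ℝ :=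
  MvPolynomial.eval (Sum.elim (fun e => θ.1 e.1 e.2) (fun e => θ.2 e.1 e.2)) p

/-- `V₀` is a proper algebraic subset of `Θ`: the intersection with `Θ` of the zero set of a
polynomial in the coordinates that does not vanish identically on `Θ`. -/
def IsProperAlgebraic (G : MixedGraph V)
    (V₀ : Set (Matrix V V ℝ × Matrix V V ℝ)) : Prop :=
  ∃ p : MvPolynomial ((V × V) ⊕ (V × V)) ℝ,
    (∃ θ ∈ G.Theta, evalParam θ p ≠ 0) ∧
    V₀ = {θ ∈ G.Theta | evalParam θ p = 0}

/-- Evaluation of a polynomial in the entries of a covariance matrix. -/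
noncomputable def evalAtCov (S : Matrix V V ℝ) (p : MvPolynomial (V × V) ℝ) : ℝ :=
  MvPolynomial.eval (fun e => S e.1 e.2) p

/-- `G` is rationally identifiable: some rational map `ψ` (each coordinate a quotient of
polynomials in the entries of the covariance matrix) satisfies `ψ ∘ φ_G = id` off a proper
algebraic subset of `Θ`. -/
def RationallyIdentifiable (G : MixedGraph V) : Prop :=
  ∃ V₀, G.IsProperAlgebraic V₀ ∧
    ∃ p q : ((V × V) ⊕ (V × V)) → MvPolynomial (V × V) ℝ,
      ∀ θ ∈ G.Theta \ V₀,
        (∀ i, evalAtCov (phi θ.1 θ.2) (q i) ≠ 0) ∧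
        (∀ v w : V, θ.1 v w * evalAtCov (phi θ.1 θ.2) (q (Sum.inl (v, w)))
            = evalAtCov (phi θ.1 θ.2) (p (Sum.inl (v, w)))) ∧
        (∀ v w : V, θ.2 v w * evalAtCov (phi θ.1 θ.2) (q (Sum.inr (v, w)))
            = evalAtCov (phi θ.1 θ.2) (p (Sum.inr (v, w))))

/-- `G` is generically identifiable: `φ_G` is injective off a proper algebraic subset. -/
def GenericallyIdentifiable (G : MixedGraph V) : Prop :=
  ∃ V₀, G.IsProperAlgebraic V₀ ∧
    Set.InjOn (fun θ : Matrix V V ℝ × Matrix V V ℝ => phi θ.1 θ.2) (G.Theta \ V₀)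

/-- `φ_G` is generically infinite-to-one. -/
def GenInfiniteToOne (G : MixedGraph V) : Prop :=
  ∃ V₀, G.IsProperAlgebraic V₀ ∧
    ∀ θ ∈ G.Theta \ V₀,
      {θ' ∈ G.Theta | phi θ'.1 θ'.2 = phi θ.1 θ.2}.Infinite

end MixedGraph

/-!
Since `(I - Λ)ᵀ Σ = Ω (I - Λ)⁻¹`, a Schur complement turns the given minor into the determinant of
`I - Λ` bordered by the rows `Y` of `Ω` and the columns `pa(v)` of the identity. Some term of its
Leibniz expansion is nonzero, so the corresponding permutation moves only along nonzero entries: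
from a border index into `V` through an entry of `Ω` (the top of a half-trek), inside `V` along
directed edges or in place, and back to a border index only from an element of `pa(v)`. The arcs of
its cycles between consecutive border indices are the required half-treks, and their right sides
are disjoint because the cycles are those of a permutation.
-/

section Paths

open Relation

variable {α ι : Type*} {r : α → α → Prop}

theorem exists_reflTransGen_forall_not [Finite α] (hr : Relator.LeftUnique r) {x : α}
    (hx : ∀ a, ¬ r a x) : ∃ w, ReflTransGen r x w ∧ ∀ b, ¬ r w b := by
  -- Otherwise a successor map on the nodes reachable from `x` is injective, hence onto by
  -- finiteness, and `x` gets a predecessor.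
  by_contra! hnext
  choose next hnext using hnext
  let succ : {w // ReflTransGen r x w} → {w // ReflTransGen r x w} :=
    fun w => ⟨next w w.2, w.2.tail (hnext w w.2)⟩
  have hsucc (w : {w // ReflTransGen r x w}) : r w (succ w) := hnext w w.2
  have hinj : Function.Injective succ := fun w w' h =>
    Subtype.ext (hr (hsucc w) (h ▸ hsucc w'))
  obtain ⟨w, hw⟩ := Finite.surjective_of_injective hinj ⟨x, .refl⟩
  exact hx w (by simpa only [hw] using hsucc w)

theorem eq_of_reflTransGen_of_leftUnique (hr : Relator.LeftUnique r) {x x' w : α}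
    (hx : ∀ a, ¬ r a x) (hx' : ∀ a, ¬ r a x') (hxw : ReflTransGen r x w)
    (hxw' : ReflTransGen r x' w) : x = x' := by
  have eq_of_reachable {z z' : α} (hz' : ∀ a, ¬ r a z') (h : ReflTransGen r z z') : z = z' :=
    h.cases_tail.elim Eq.symm fun ⟨a, _, ha⟩ => (hz' a ha).elim
  rcases ReflTransGen.total_of_right_unique hr.flip hxw.swap hxw'.swap with h | h
  · exact (eq_of_reachable hx h.swap).symm
  · exact eq_of_reachable hx' h.swap

theorem exists_pairwise_disjoint_chains [Finite α] (hr : Relator.LeftUnique r) {s : ι → α}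
    (hs : Function.Injective s) (hsource : ∀ i a, ¬ r a (s i)) :
    ∃ l : ι → List α,
      (∀ i, (s i :: l i).IsChain fun a b => r a b ∧ a ≠ b) ∧
      (∀ i b, ¬ r ((s i :: l i).getLast (List.cons_ne_nil _ _)) b) ∧
      Pairwise fun i j => (s i :: l i).Disjoint (s j :: l j) := by
  have hpath (i) : ∃ l, (s i :: l).IsChain (fun a b => r a b ∧ a ≠ b) ∧
      ∀ b, ¬ r ((s i :: l).getLast (List.cons_ne_nil _ _)) b := by
    obtain ⟨w, hw, hlast⟩ := exists_reflTransGen_forall_not hr (hsource i)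
    have hw_ne : ReflTransGen (fun a b => r a b ∧ a ≠ b) (s i) w := by
      refine reflTransGen_closed (fun a b hab => ?_) _ _ hw
      by_cases h : a = b
      · exact h ▸ .refl
      · exact .single ⟨hab, h⟩
    obtain ⟨l, hl, rfl⟩ := List.exists_isChain_cons_of_relationReflTransGen hw_ne
    exact ⟨l, hl, hlast⟩
  choose l hchain hlast using hpath
  have hreach (i) : ∀ w ∈ s i :: l i, ReflTransGen r (s i) w :=
    (hchain i).induction _ _ (fun _ _ hab h => h.tail hab.1) fun _ => .refl
  exact ⟨l, hchain, hlast, fun i j hij w hi hj => hij <| hs <|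
    eq_of_reflTransGen_of_leftUnique hr (hsource i) (hsource j) (hreach i w hi) (hreach j w hj)⟩

end Paths

section BorderedMatrix

variable {k l m n R : Type*} [Fintype m] [DecidableEq m] [CommRing R]

theorem exists_perm_forall_apply_ne_zero_of_det_ne_zero {M : Matrix m m R} (hM : M.det ≠ 0) :
    ∃ σ : Equiv.Perm m, ∀ i, M i (σ i) ≠ 0 := by
  contrapose! hM
  rw [← M.det_transpose, Matrix.det_apply]
  refine Finset.sum_eq_zero fun σ _ => ?_
  obtain ⟨i, hi⟩ := hM σ
  rw [Finset.prod_eq_zero (Finset.mem_univ i) hi, smul_zero]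

theorem injective_of_det_submatrix_ne_zero {A : Matrix k l R} {y : m → k} {p : m → l}
    (h : (A.submatrix y p).det ≠ 0) : Function.Injective y := fun i j hij => by
  by_contra hne
  exact h (Matrix.det_zero_of_row_eq hne (by ext; simp [hij]))

variable [Fintype n] [DecidableEq n]

/-- The matrix `N` bordered on top by the rows `y` of `Ω` and on the left by the columns `p` of
the identity matrix, which expresses a minor of `Ω * N⁻¹` without inverses. -/
def borderedMatrix (Ω : Matrix k n R) (N : Matrix n n R) (y : m → k) (p : m → n) :
    Matrix (m ⊕ n) (m ⊕ n) R :=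
  Matrix.fromBlocks 0 (Ω.submatrix y id) ((1 : Matrix n n R).submatrix id p) N

theorem det_borderedMatrix (Ω : Matrix k n R) {N : Matrix n n R} (hN : IsUnit N.det)
    (y : m → k) (p : m → n) :
    (borderedMatrix Ω N y p).det =
      N.det * ((-1) ^ Fintype.card m * ((Ω * N⁻¹).submatrix y p).det) := by
  let := Matrix.invertibleOfIsUnitDet N hN
  have hminor : Ω.submatrix y id * N⁻¹ * (1 : Matrix n n R).submatrix id p =
      (Ω * N⁻¹).submatrix y p := by
    ext i j
    simp [Matrix.mul_apply, Matrix.one_apply]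
  rw [borderedMatrix, Matrix.det_fromBlocks₂₂, Matrix.invOf_eq_nonsing_inv, hminor, zero_sub,
    Matrix.det_neg]

theorem det_borderedMatrix_ne_zero {Ω : Matrix k n R} {N : Matrix n n R} (hN : IsUnit N.det)
    {y : m → k} {p : m → n} (h : ((Ω * N⁻¹).submatrix y p).det ≠ 0) :
    (borderedMatrix Ω N y p).det ≠ 0 := by
  rwa [det_borderedMatrix Ω hN, ne_eq, hN.mul_right_eq_zero,
    (isUnit_one.neg.pow _).mul_right_eq_zero]

end BorderedMatrix

namespace MixedGraph

variable {V ι R : Type*} [Fintype V] [DecidableEq V] {G : MixedGraph V}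

namespace Trek

/-- The half-trek from `y` that passes to `w`, staying put if `y = w` and along the bidirected edge
`y ↔ w` otherwise, and then follows the directed path `w :: l`. -/
def ofPath {y w : V} {l : List V} (hyw : y = w ∨ (y, w) ∈ G.B)
    (hl : (w :: l).IsChain fun a b => (a, b) ∈ G.D) : G.Trek where
  left := [y]
  right := w :: l
  left_ne := List.cons_ne_nil _ _
  right_ne := List.cons_ne_nil _ _
  hasBidir := decide (y ≠ w)
  left_chain := List.isChain_singleton _
  right_chain := hl
  head_cond := by by_cases h : y = w <;> simp_all

theorem isHalfTrek_ofPath {y w : V} {l : List V} (hyw : y = w ∨ (y, w) ∈ G.B)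
    (hl : (w :: l).IsChain fun a b => (a, b) ∈ G.D) : (ofPath hyw hl).IsHalfTrek :=
  Finset.card_singleton y

theorem target_mem_rightSet (π : G.Trek) : π.target ∈ π.rightSet :=
  List.mem_toFinset.2 (List.getLast_mem _)

theorem IsHalfTrek.leftSet_eq {π : G.Trek} (h : π.IsHalfTrek) : π.leftSet = {π.source} := by
  have hsource : π.source ∈ π.leftSet := List.mem_toFinset.2 (List.getLast_mem _)
  obtain ⟨a, ha⟩ := Finset.card_eq_one.1 h
  rw [ha, Finset.mem_singleton] at hsource
  rw [ha, hsource]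

end Trek

theorem IsTrekSystem.card_eq {Y P : Finset V} {f : V → G.Trek} (h : G.IsTrekSystem Y P f) :
    Y.card = P.card := by
  obtain ⟨-, htargets, hne⟩ := h
  have hinj : Set.InjOn (fun y => (f y).target) Y := fun a ha b hb =>
    not_imp_not.1 (hne a ha b hb)
  rw [← htargets, Finset.card_image_of_injOn hinj]

/-- There is a system of half-treks from `Y` to `P` with no sided intersection. -/
def HasHalfTrekSystem (G : MixedGraph V) (Y P : Finset V) : Prop :=
  ∃ f : V → G.Trek, (∀ y ∈ Y, (f y).IsHalfTrek) ∧ G.IsTrekSystem Y P f ∧ G.NoSidedIntersection Y f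

theorem HasHalfTrekSystem.satisfiesHTC {v : V} {Y : Finset V}
    (h : G.HasHalfTrekSystem Y (G.pa v)) (hY : ∀ y ∈ Y, y ≠ v ∧ y ∉ G.sib v) :
    G.SatisfiesHTC v Y :=
  let ⟨_, _, hsystem, _⟩ := h
  ⟨hsystem.card_eq, hY, h⟩

theorem hasHalfTrekSystem_of_pairwise_disjoint [Fintype ι] {y p : ι → V}
    (hy : Function.Injective y) (τ : ι → G.Trek) (hhalf : ∀ i, (τ i).IsHalfTrek)
    (hsource : ∀ i, (τ i).source = y i) (htarget : ∀ i, ∃ j, (τ i).target = p j)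
    (hdisj : Pairwise fun i j => Disjoint (τ i).rightSet (τ j).rightSet) :
    G.HasHalfTrekSystem (Finset.univ.image y) (Finset.univ.image p) := by
  let f : V → G.Trek :=
    Function.extend y τ fun w => Trek.ofPath (Or.inl (Eq.refl w)) (List.isChain_singleton w)
  have hf (i) : f (y i) = τ i := hy.extend_apply _ _ i
  have htarget_inj : Function.Injective fun i => (τ i).target := fun i j hij => by
    by_contra hne
    exact Finset.disjoint_left.1 (hdisj hne) (τ i).target_mem_rightSet
      (by simpa only [hij] using (τ j).target_mem_rightSet)
  have htargets : Finset.univ.image (fun i => (τ i).target) = Finset.univ.image p := by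
    refine Finset.eq_of_subset_of_card_le (fun w hw => ?_) ?_
    · obtain ⟨i, -, rfl⟩ := Finset.mem_image.1 hw
      obtain ⟨j, hj⟩ := htarget i
      exact Finset.mem_image.2 ⟨j, Finset.mem_univ j, hj.symm⟩
    · rw [Finset.card_image_of_injective _ htarget_inj]
      exact Finset.card_image_le
  refine ⟨f, ?_, ⟨?_, ?_, ?_⟩, ?_⟩
  · simpa [hf] using hhalf
  · simpa [hf] using hsource
  · simpa only [Finset.image_image, Function.comp_def, hf] using htargets
  · simpa [hf, hy.eq_iff] using fun i j hij => htarget_inj.ne hij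
  · simpa [NoSidedIntersection, hf, hy.eq_iff, (hhalf _).leftSet_eq, hsource] using
      fun i j hij => ⟨Ne.symm hij, hdisj hij⟩

theorem hasHalfTrekSystem_of_perm [Fintype ι] {y p : ι → V} (hy : Function.Injective y)
    (σ : Equiv.Perm (ι ⊕ V))
    (hstart : ∀ i, ∃ w, σ (Sum.inl i) = Sum.inr w ∧ (y i = w ∨ (y i, w) ∈ G.B))
    (hstep : ∀ a b, σ (Sum.inr a) = Sum.inr b → a ≠ b → (a, b) ∈ G.D)
    (hend : ∀ a j, σ (Sum.inr a) = Sum.inl j → a = p j) :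
    G.HasHalfTrekSystem (Finset.univ.image y) (Finset.univ.image p) := by
  choose s hs hys using hstart
  have hs_inj : Function.Injective s := fun i j hij =>
    Sum.inl_injective (σ.injective (by rw [hs, hs, hij]))
  have hs_source (i a) : σ (Sum.inr a) ≠ Sum.inr (s i) := fun h =>
    Sum.inr_ne_inl (σ.injective (h.trans (hs i).symm))
  have hσ : Relator.LeftUnique fun a b => σ (Sum.inr a) = Sum.inr b := fun a b c ha hb =>
    Sum.inr_injective (σ.injective (ha.trans hb.symm))
  obtain ⟨l, hchain, hlast, hdisj⟩ := exists_pairwise_disjoint_chains hσ hs_inj hs_source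
  refine hasHalfTrekSystem_of_pairwise_disjoint hy
    (fun i => Trek.ofPath (hys i) ((hchain i).imp fun a b hab => hstep a b hab.1 hab.2))
    (fun i => Trek.isHalfTrek_ofPath _ _) (fun i => rfl) (fun i => ?_) fun i j hij => ?_
  · cases hexit : σ (Sum.inr ((s i :: l i).getLast (List.cons_ne_nil _ _))) with
    | inl j => exact ⟨j, hend _ j hexit⟩
    | inr b => exact (hlast i b hexit).elim
  · exact List.disjoint_toFinset_iff_disjoint.2 (hdisj hij)

theorem transpose_one_sub_mul_phi [CommRing R] {Λ : Matrix V V R} (hΛ : IsUnit (1 - Λ).det)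
    (Ω : Matrix V V R) : (1 - Λ)ᵀ * phi Λ Ω = Ω * (1 - Λ)⁻¹ := by
  rw [phi, Matrix.mul_assoc, ← Matrix.mul_assoc, ← Matrix.transpose_mul,
    Matrix.nonsing_inv_mul _ hΛ, Matrix.transpose_one, Matrix.one_mul]

theorem hasHalfTrekSystem_of_det_ne_zero [CommRing R] [Fintype ι] [DecidableEq ι] {y p : ι → V}
    {Λ Ω : Matrix V V R} (hΛ : ∀ a b, (a, b) ∉ G.D → Λ a b = 0) (hdet : IsUnit (1 - Λ).det)
    (hΩ : ∀ a b, a ≠ b → (a, b) ∉ G.B → Ω a b = 0)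
    (h : (((1 - Λ)ᵀ * phi Λ Ω).submatrix y p).det ≠ 0) :
    G.HasHalfTrekSystem (Finset.univ.image y) (Finset.univ.image p) := by
  have hy := injective_of_det_submatrix_ne_zero h
  rw [transpose_one_sub_mul_phi hdet] at h
  obtain ⟨σ, hσ⟩ :=
    exists_perm_forall_apply_ne_zero_of_det_ne_zero (det_borderedMatrix_ne_zero hdet h)
  refine hasHalfTrekSystem_of_perm hy σ (fun i => ?_) (fun a b hab hne => ?_) fun a j haj => ?_
  · have hi := hσ (Sum.inl i)
    cases hexit : σ (Sum.inl i) with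
    | inl j => simp [hexit, borderedMatrix] at hi
    | inr w =>
      refine ⟨w, rfl, or_iff_not_imp_left.2 fun hne => not_imp_comm.1 (hΩ _ _ hne) ?_⟩
      simpa [hexit, borderedMatrix] using hi
  · have ha := hσ (Sum.inr a)
    refine not_imp_comm.1 (hΛ a b) ?_
    simpa [hab, borderedMatrix, hne] using ha
  · have ha := hσ (Sum.inr a)
    by_contra hne
    simp [haj, borderedMatrix, hne] at ha

end MixedGraph

theorem invertible_implies_htc_general {V ι R : Type*} [Fintype V] [DecidableEq V] [Fintype ι]
    [DecidableEq ι] [CommRing R] (G : MixedGraph V) (v : V) {y p : ι → V}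
    (hpa : Finset.univ.image p = G.pa v) (hYv : ∀ i, y i ≠ v ∧ y i ∉ G.sib v) {Λ Ω : Matrix V V R}
    (hΛ : ∀ a b, (a, b) ∉ G.D → Λ a b = 0) (hdet : IsUnit (1 - Λ).det)
    (hΩ : ∀ a b, a ≠ b → (a, b) ∉ G.B → Ω a b = 0)
    (h : (((1 - Λ)ᵀ * MixedGraph.phi Λ Ω).submatrix y p).det ≠ 0) :
    G.SatisfiesHTC v (Finset.univ.image y) := by
  have hsystem := MixedGraph.hasHalfTrekSystem_of_det_ne_zero hΛ hdet hΩ h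
  rw [hpa] at hsystem
  exact hsystem.satisfiesHTC (by simpa using hYv)

/-- Lemma 2: if the matrix `[(I-Λ)ᵀ Σ]_{Y, pa(v)}` is invertible for some parameter point
`(Λ, Ω) ∈ Θ` (with `Σ = φ_G(Λ, Ω)`), then `Y` satisfies the half-trek criterion with
respect to `v`. -/
theorem invertible_implies_htc {V : Type*} [Fintype V] [DecidableEq V]
    (G : MixedGraph V) (v : V) (n : ℕ) (y p : Fin n → V)
    (hy : Function.Injective y) (hp : Function.Injective p)
    (hpa : Finset.univ.image p = G.pa v)
    (hYv : ∀ i, y i ≠ v ∧ y i ∉ G.sib v)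
    (h : ∃ θ ∈ G.Theta,
      IsUnit (Matrix.of fun i j : Fin n =>
        (((1 - θ.1)ᵀ * MixedGraph.phi θ.1 θ.2 : Matrix V V ℝ)) (y i) (p j)).det) :
    G.SatisfiesHTC v (Finset.univ.image y) := by
  obtain ⟨θ, ⟨⟨hΛ, hdet⟩, -, hΩ⟩, hunit⟩ := h
  exact invertible_implies_htc_general G v hpa hYv hΛ hdet hΩ hunit.ne_zero
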